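/- Let G be a connected graph on ℕ with uniformly bounded degree and deg(i) ≥ 1 for all i. Suppose there exists an isomorphism of Hilbert evolution algebras f from A(G) to A_RW(G) (a continuous linear bijection with continuous inverse satisfying f(v ⋆ w) = f(v) ∘ f(w) for all v, w) of the form f(δ_i) = α_i δ_{π(i)} for all i ∈ ℕ, where each α_i ≠ 0 and π : ℕ → ℕ is a bijection. Then G is a regular graph or a biregular graph. -/

import Mathlib

/-!
Comparing coordinates in `f (δ_i ⋆ δ_i) = f δ_i ∘ f δ_i` gives
`α_k a_{ki} = α_i² a_{π(k)π(i)} / deg (π i)` for all `i, k` (`coord_relation`). Since the `α`'s do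
not vanish, `π` preserves adjacency, hence degrees, and `α_k = α_i² / deg i` along each edge
(`edge_relation`). So all neighbours of a vertex carry the same weight, and by connectedness
`α` alternates along edges between two values `x` and `y`, with `deg i` equal to `x² / y` where
`α i = x` and to `y² / x` where `α i = y`. If `x = y` the graph is regular; otherwise the level
sets of `α` form the bipartition of a biregular graph.
-/

noncomputable section
open scoped ENNReal

/-- The real Hilbert space ℓ²(ℕ) of square-summable sequences. -/
abbrev l2 : Type := lp (fun _ : ℕ => ℝ) 2

/-- The degree of vertex `i` in the graph with adjacency coefficients `a`. -/
def deg (a : ℕ → ℕ → ℝ) (i : ℕ) : ℝ := ∑' k, a k i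

/-- `a` is the adjacency function of a simple graph (0/1-valued, symmetric, no loops). -/
def SimpleAdj (a : ℕ → ℕ → ℝ) : Prop :=
  (∀ k i, a k i = 0 ∨ a k i = 1) ∧ (∀ k i, a k i = a i k) ∧ (∀ i, a i i = 0)

/-- The graph is connected: any two vertices are joined by a finite path of edges. -/
def Connected (a : ℕ → ℕ → ℝ) : Prop :=
  ∀ i j : ℕ, Relation.ReflTransGen (fun x y => a x y = 1) i j

/-- The graph is locally finite: every degree series converges. -/
def GraphLocallyFinite (a : ℕ → ℕ → ℝ) : Prop := ∀ i, Summable fun k => a k i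

/-- The graph has uniformly bounded degree. -/
def UnifBoundedDegree (a : ℕ → ℕ → ℝ) : Prop := ∃ M > 0, ∀ i, deg a i ≤ M

/-- The graph is regular: all degrees are equal. -/
def GraphRegular (a : ℕ → ℕ → ℝ) : Prop := ∃ d : ℝ, ∀ i, deg a i = d

/-- The graph is biregular: the vertex set splits as `V₁ ⊔ V₂` with every edge joining `V₁`
to `V₂` and constant degrees `d₁` on `V₁` and `d₂` on `V₂`. -/
def GraphBiregular (a : ℕ → ℕ → ℝ) : Prop :=
  ∃ (V₁ : Set ℕ) (d₁ d₂ : ℝ),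
    (∀ i ∈ V₁, deg a i = d₁) ∧ (∀ i ∉ V₁, deg a i = d₂) ∧
    ∀ i k, a k i = 1 → ((i ∈ V₁ ∧ k ∉ V₁) ∨ (i ∉ V₁ ∧ k ∈ V₁))

/-- `p` is the product `v ⋆ w` in the Hilbert evolution algebra `A(G)`:
`p_k = ∑_i v_i w_i a_{ki}` with all series convergent. -/
def IsStarProd (a : ℕ → ℕ → ℝ) (v w p : l2) : Prop :=
  (∀ k, Summable fun i => v i * w i * a k i) ∧
  ∀ k, p k = ∑' i, v i * w i * a k i

/-- `p` is the product `v ∘ w` in the Hilbert evolution algebra `A_RW(G)`: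
`p_k = ∑_i v_i w_i a_{ki}/deg(i)` with all series convergent. -/
def IsRWProd (a : ℕ → ℕ → ℝ) (v w p : l2) : Prop :=
  (∀ k, Summable fun i => v i * w i * (a k i / deg a i)) ∧
  ∀ k, p k = ∑' i, v i * w i * (a k i / deg a i)

/-- The graph is non-singular: the adjacency operator `(A v)_k = ∑_i a_{ki} v_i` on ℓ²(ℕ)
has trivial kernel. -/
def NonSingular (a : ℕ → ℕ → ℝ) : Prop :=
  ∀ v : l2, (∀ k, ∑' i, a k i * v i = 0) → v = 0

/-- The standard orthonormal basis vector `δ_i` of ℓ²(ℕ). -/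
def delta (i : ℕ) : l2 := lp.single 2 i (1 : ℝ)

lemma delta_apply (i k : ℕ) : delta i k = if k = i then 1 else 0 := by
  by_cases h : k = i
  · subst h; simp [delta]
  · simp [delta, h]

/-- A 0/1-valued summable sequence is square-summable, so the columns of the adjacency matrix are
vectors of ℓ². -/
lemma memlp_column {a : ℕ → ℕ → ℝ} (hadj : SimpleAdj a) (hlf : GraphLocallyFinite a) (i : ℕ) :
    Memℓp (fun k => a k i) 2 := by
  apply memℓp_gen
  refine (hlf i).congr fun k => ?_
  rcases hadj.1 k i with h | h <;> simp [h]

/-- By continuity, a weighted permutation of the basis acts on all of ℓ² as a weighted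
permutation of the coordinates. -/
lemma weighted_perm_apply (f : l2 ≃L[ℝ] l2) (π : Equiv.Perm ℕ) (α : ℕ → ℝ)
    (hf : ∀ i, f (delta i) = α i • delta (π i)) (p : l2) (k : ℕ) :
    f p (π k) = α k * p k := by
  have h1 : HasSum (fun j => lp.single 2 j (p j)) p :=
    lp.hasSum_single (by norm_num) p
  have h2 := h1.mapL (f : l2 →L[ℝ] l2)
  have h3 := h2.mapL (lp.evalCLM ℝ (fun _ : ℕ => ℝ) 2 (π k))
  have h4 : ∀ j, lp.evalCLM ℝ (fun _ : ℕ => ℝ) 2 (π k)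
      ((f : l2 →L[ℝ] l2) (lp.single 2 j (p j))) = if j = k then α k * p k else 0 := by
    intro j
    have : (lp.single 2 j (p j) : l2) = p j • delta j := by
      rw [delta, ← lp.single_smul]; simp
    rw [this]
    change (f (p j • delta j)) (π k) = _
    rw [map_smul, hf]
    simp only [lp.coeFn_smul, Pi.smul_apply, delta_apply, smul_eq_mul, π.injective.eq_iff]
    by_cases h : j = k
    · subst h; simp; ring
    · simp [h, Ne.symm h]
  simp only [h4] at h3
  exact h3.unique (hasSum_ite_eq k _)

lemma coord_relation {a : ℕ → ℕ → ℝ} (hadj : SimpleAdj a) (hlf : GraphLocallyFinite a)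
    (f : l2 ≃L[ℝ] l2) (π : Equiv.Perm ℕ) (α : ℕ → ℝ)
    (hf : ∀ i, f (delta i) = α i • delta (π i))
    (hmul : ∀ v w p q : l2, IsStarProd a v w p → IsRWProd a (f v) (f w) q → f p = q)
    (i k : ℕ) : α k * a k i = α i ^ 2 * (a (π k) (π i) / deg a (π i)) := by
  let p : l2 := ⟨fun k => a k i, memlp_column hadj hlf i⟩
  let r : l2 := ⟨fun k => a k (π i), memlp_column hadj hlf (π i)⟩
  let q : l2 := (α i ^ 2 / deg a (π i)) • r
  have e1 : ∀ k, (fun j => delta i j * delta i j * a k j) =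
      fun j => if j = i then a k i else 0 := by
    intro k; funext j; rw [delta_apply]; by_cases h : j = i
    · subst h; simp
    · simp [h]
  have e2 : ∀ k, (fun j => f (delta i) j * f (delta i) j * (a k j / deg a j)) =
      fun j => if j = π i then α i ^ 2 * (a k (π i) / deg a (π i)) else 0 := by
    intro k; funext j
    rw [hf]
    simp only [lp.coeFn_smul, Pi.smul_apply, delta_apply, smul_eq_mul]
    by_cases h : j = π i
    · subst h; rw [if_pos rfl, if_pos rfl]; ring
    · simp [h]
  have hp : IsStarProd a (delta i) (delta i) p := by
    refine ⟨fun k => ?_, fun k => ?_⟩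
    · rw [e1]; exact (hasSum_ite_eq i _).summable
    · rw [e1, tsum_ite_eq]
  have hq : IsRWProd a (f (delta i)) (f (delta i)) q := by
    refine ⟨fun k => ?_, fun k => ?_⟩
    · rw [e2]; exact (hasSum_ite_eq (π i) _).summable
    · rw [e2, tsum_ite_eq]
      change α i ^ 2 / deg a (π i) * a k (π i) = _
      ring
  have h := weighted_perm_apply f π α hf p k
  rw [hmul _ _ _ _ hp hq] at h
  change α i ^ 2 / deg a (π i) * a (π k) (π i) = α k * a k i at h
  rw [← h]; ring

lemma edge_relation {a : ℕ → ℕ → ℝ} (hadj : SimpleAdj a) (hdeg : ∀ i, 1 ≤ deg a i)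
    (π : Equiv.Perm ℕ) (α : ℕ → ℝ) (hα : ∀ i, α i ≠ 0)
    (hrel : ∀ i k, α k * a k i = α i ^ 2 * (a (π k) (π i) / deg a (π i)))
    (i k : ℕ) (hik : a k i = 1) : α k = α i ^ 2 / deg a i := by
  have hd : ∀ i, deg a i ≠ 0 := fun i => by linarith [hdeg i]
  have haut : ∀ i k, a (π k) (π i) = a k i := by
    intro i k
    have h := hrel i k
    rcases hadj.1 k i with h1 | h1 <;> rcases hadj.1 (π k) (π i) with h2 | h2
    · rw [h1, h2]
    · simp [h1, h2, hα, hd] at h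
    · simp [h1, h2, hα] at h
    · rw [h1, h2]
  have hdπ : deg a (π i) = deg a i := by
    unfold deg
    rw [← π.tsum_eq]
    simp only [haut]
  have h := hrel i k
  rw [haut, hik, hdπ] at h
  rw [← mul_one (α k), h]; ring

/-- for a connected graph with uniformly bounded degree and all degrees at
least 1, if there exists an isomorphism of Hilbert evolution algebras from `A(G)` to
`A_RW(G)` of the form `f(δ_i) = α_i δ_{π(i)}` with `α_i ≠ 0` and `π` a bijection, then the
graph is regular or biregular. -/
theorem regular_or_biregular_of_weighted_permutation_iso
    (a : ℕ → ℕ → ℝ)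
    (hadj : SimpleAdj a) (hconn : Connected a)
    (hlf : GraphLocallyFinite a) (hubd : UnifBoundedDegree a)
    (hdeg : ∀ i, 1 ≤ deg a i)
    (hiso : ∃ (f : l2 ≃L[ℝ] l2) (π : Equiv.Perm ℕ) (α : ℕ → ℝ),
      (∀ i, α i ≠ 0) ∧
      (∀ i, f (delta i) = α i • delta (π i)) ∧
      (∀ v w p q : l2, IsStarProd a v w p → IsRWProd a (f v) (f w) q → f p = q)) :
    GraphRegular a ∨ GraphBiregular a := by
  obtain ⟨f, π, α, hα, hf, hmul⟩ := hiso
  have hedge := edge_relation hadj hdeg π α hα (coord_relation hadj hlf f π α hf hmul)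
  have hd : ∀ i, deg a i ≠ 0 := fun i => by linarith [hdeg i]
  -- `β i` is the weight carried by every neighbour of `i`
  set β : ℕ → ℝ := fun i => α i ^ 2 / deg a i with hβ
  have hdβ : ∀ i, deg a i = α i ^ 2 / β i := by
    intro i
    have := hα i
    have := hd i
    simp only [hβ]
    field_simp
  have hαβ : ∀ i k, a k i = 1 → α k = β i := hedge
  have key : ∀ i, (α i = α 0 ∧ β i = β 0) ∨ (α i = β 0 ∧ β i = α 0) := by
    intro i
    induction hconn 0 i with
    | refl => exact Or.inl ⟨rfl, rfl⟩
    | @tail b c _ hbc ih =>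
      have h1 : α b = β c := hαβ c b hbc
      have h2 : α c = β b := hαβ b c (by rw [hadj.2.1]; exact hbc)
      rw [h2, ← h1]
      tauto
  by_cases hxy : α 0 = β 0
  · refine Or.inl ⟨α 0 ^ 2 / β 0, fun i => ?_⟩
    rw [hdβ i]
    rcases key i with ⟨h1, h2⟩ | ⟨h1, h2⟩ <;> rw [h1, h2]
    rw [hxy]
  · refine Or.inr ⟨{i | α i = α 0}, α 0 ^ 2 / β 0, β 0 ^ 2 / α 0, ?_, ?_, ?_⟩
    · intro i (hi : α i = α 0)
      rw [hdβ i]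
      rcases key i with ⟨h1, h2⟩ | ⟨h1, h2⟩
      · rw [h1, h2]
      · exact absurd (hi.symm.trans h1) hxy
    · intro i (hi : ¬ α i = α 0)
      rw [hdβ i]
      rcases key i with ⟨h1, h2⟩ | ⟨h1, h2⟩
      · exact absurd h1 hi
      · rw [h1, h2]
    · intro i k hik
      have h3 := hαβ i k hik
      simp only [Set.mem_ofPred_eq]
      rcases key i with ⟨h1, h2⟩ | ⟨h1, h2⟩
      · left
        exact ⟨h1, by rw [h3, h2]; exact fun h => hxy h.symm⟩
      · right
        exact ⟨by rw [h1]; exact fun h => hxy h.symm, by rw [h3, h2]⟩
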